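/- arXiv:1906.03470 — 5 statements merged into one kernel-verified Lean document; each statement's English description precedes it below -/
import Mathlib

section
/- Let π : [0,1] → ℝ be differentiable with π' ≤ 0 on [0,1] (capillary pressure, nonincreasing), with π ≥ 0 and π' interval-integrable, and let f : [0,1] → ℝ be integrable with 0 ≤ f(a) ≤ 1 for all a ∈ [0,1] (fractional flow). Fix s ∈ [0,1] and real phase pressures p_w, p_n with p_n − p_w = π(s). Define β(s) = ∫_1^s (1/2 − f(a)) π'(a) da and the global pressure p = (p_w + p_n)/2 + β(s). Then p_w ≤ p ≤ p_n. -/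
open MeasureTheory

/-!
Since `1/2 - f` takes values in `[-1/2, 1/2]`, the correction `β(s)` is bounded by half the total
variation of the monotone function `π` on `[s, 1]`, that is `|β(s)| ≤ (π(s) - π(1)) / 2`. As
`π(1) ≥ 0`, this is at most `π(s) / 2 = (p_n - p_w) / 2`, the distance from the mean pressure to
either phase pressure.
-/

open Set

section DerivNonpos

variable {φ φ' : ℝ → ℝ} {a b : ℝ}

theorem integrableOn_deriv_of_nonpos (hcont : ContinuousOn φ (Icc a b))
    (hderiv : ∀ x ∈ Ioo a b, HasDerivAt φ (φ' x) x) (hnonpos : ∀ x ∈ Ioo a b, φ' x ≤ 0) :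
    IntegrableOn φ' (Ioc a b) :=
  integrable_neg_iff.1 <| intervalIntegral.integrableOn_deriv_of_nonneg hcont.neg
    (fun x hx => (hderiv x hx).neg) fun x hx => neg_nonneg.2 (hnonpos x hx)

variable {E : Type*} [NormedAddCommGroup E] [NormedSpace ℝ E] {g : ℝ → E} {C : ℝ}

theorem norm_integral_deriv_smul_le_of_nonpos (hab : a ≤ b)
    (hcont : ContinuousOn φ (Icc a b))
    (hderiv : ∀ x ∈ Ioo a b, HasDerivAt φ (φ' x) x) (hnonpos : ∀ x ∈ Ioo a b, φ' x ≤ 0)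
    (hg : ∀ x ∈ Ioo a b, ‖g x‖ ≤ C) :
    ‖∫ x in a..b, φ' x • g x‖ ≤ C * (φ a - φ b) := by
  have hint : IntervalIntegrable φ' volume a b :=
    (intervalIntegrable_iff_integrableOn_Ioc_of_le hab).2
      (integrableOn_deriv_of_nonpos hcont hderiv hnonpos)
  have hbound : ∀ x ∈ Ioo a b, ‖φ' x • g x‖ ≤ -C * φ' x := fun x hx =>
    calc ‖φ' x • g x‖ = -φ' x * ‖g x‖ := by
          rw [norm_smul, Real.norm_of_nonpos (hnonpos x hx)]
      _ ≤ -φ' x * C := mul_le_mul_of_nonneg_left (hg x hx) (neg_nonneg.2 (hnonpos x hx))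
      _ = -C * φ' x := by ring
  have hbound_ae : ∀ᵐ x, x ∈ Ioc a b → ‖φ' x • g x‖ ≤ -C * φ' x := by
    rw [← ae_restrict_iff' measurableSet_Ioc, ← restrict_Ioo_eq_restrict_Ioc]
    exact ae_restrict_of_forall_mem measurableSet_Ioo hbound
  calc ‖∫ x in a..b, φ' x • g x‖
      ≤ ∫ x in a..b, -C * φ' x :=
        intervalIntegral.norm_integral_le_of_norm_le hab hbound_ae (hint.const_mul _)
    _ = -C * (φ b - φ a) := by
        rw [intervalIntegral.integral_const_mul,
          intervalIntegral.integral_eq_sub_of_hasDerivAt_of_le hab hcont hderiv hint]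
    _ = C * (φ a - φ b) := by ring

theorem intervalIntegrable_deriv_smul_of_nonpos (hab : a ≤ b)
    (hcont : ContinuousOn φ (Icc a b))
    (hderiv : ∀ x ∈ Ioo a b, HasDerivAt φ (φ' x) x) (hnonpos : ∀ x ∈ Ioo a b, φ' x ≤ 0)
    (hgm : AEStronglyMeasurable g (volume.restrict (Ioc a b)))
    (hg : ∀ x ∈ Ioo a b, ‖g x‖ ≤ C) :
    IntervalIntegrable (fun x => φ' x • g x) volume a b := by
  have hg_ae : ∀ᵐ x ∂volume.restrict (Ioc a b), ‖g x‖ ≤ C := by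
    rw [← restrict_Ioo_eq_restrict_Ioc]
    exact ae_restrict_of_forall_mem measurableSet_Ioo hg
  exact (intervalIntegrable_iff_integrableOn_Ioc_of_le hab).2
    ((integrableOn_deriv_of_nonpos hcont hderiv hnonpos).smul_bdd C hgm hg_ae)

end DerivNonpos

theorem global_pressure_between_phase_pressures_general {π π' f : ℝ → ℝ} {a b s pw pn : ℝ}
    (hπcont : ContinuousOn π (Icc a b)) (hπderiv : ∀ x ∈ Ioo a b, HasDerivAt π (π' x) x)
    (hπ'nonpos : ∀ x ∈ Ioo a b, π' x ≤ 0) (hπb : 0 ≤ π b)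
    (hfint : IntervalIntegrable f volume a b) (hf : ∀ x ∈ Ioo a b, 0 ≤ f x ∧ f x ≤ 1)
    (hs : s ∈ Icc a b) (hcap : pn - pw = π s) :
    IntervalIntegrable (fun x => (1 / 2 - f x) * π' x) volume b s ∧
      pw ≤ (pw + pn) / 2 + ∫ x in b..s, (1 / 2 - f x) * π' x ∧
      (pw + pn) / 2 + (∫ x in b..s, (1 / 2 - f x) * π' x) ≤ pn := by
  have hsub : Ioo s b ⊆ Ioo a b := Ioo_subset_Ioo_left hs.1
  have hcont : ContinuousOn π (Icc s b) := hπcont.mono (Icc_subset_Icc_left hs.1)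
  have hderiv : ∀ x ∈ Ioo s b, HasDerivAt π (π' x) x := fun x hx => hπderiv x (hsub hx)
  have hnonpos : ∀ x ∈ Ioo s b, π' x ≤ 0 := fun x hx => hπ'nonpos x (hsub hx)
  have hweight : ∀ x ∈ Ioo s b, ‖1 / 2 - f x‖ ≤ 1 / 2 := fun x hx => by
    obtain ⟨hf0, hf1⟩ := hf x (hsub hx)
    exact abs_le.2 ⟨by linarith, by linarith⟩
  have hmeas : AEStronglyMeasurable (fun x => 1 / 2 - f x) (volume.restrict (Ioc s b)) :=
    aestronglyMeasurable_const.sub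
      (hfint.1.aestronglyMeasurable.mono_set (Ioc_subset_Ioc_left hs.1))
  have hint := intervalIntegrable_deriv_smul_of_nonpos hs.2 hcont hderiv hnonpos hmeas hweight
  have hβ := norm_integral_deriv_smul_le_of_nonpos hs.2 hcont hderiv hnonpos hweight
  simp only [smul_eq_mul, mul_comm (π' _)] at hint hβ
  rw [← norm_neg, ← intervalIntegral.integral_symm, Real.norm_eq_abs, abs_le] at hβ
  exact ⟨hint.symm, by linarith [hβ.1], by linarith [hβ.2]⟩

/-- For the global pressure `p = (p_w + p_n)/2 + β(s)` with
`β(s) = ∫_1^s (1/2 − f(a)) π'(a) da`, capillary pressure `π` nonincreasing and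
nonnegative on `[0,1]`, fractional flow `f` with values in `[0,1]`, and
`p_n − p_w = π(s)`, one has `p_w ≤ p ≤ p_n`. -/
theorem global_pressure_between_phase_pressures
    (π π' f : ℝ → ℝ)
    (hπdiff : ∀ a ∈ Set.Icc (0:ℝ) 1, HasDerivAt π (π' a) a)
    (hπ'nonpos : ∀ a ∈ Set.Icc (0:ℝ) 1, π' a ≤ 0)
    (hπnonneg : ∀ a ∈ Set.Icc (0:ℝ) 1, 0 ≤ π a)
    (hπ'int : IntervalIntegrable π' volume 0 1)
    (hfint : IntervalIntegrable f volume 0 1)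
    (hf : ∀ a ∈ Set.Icc (0:ℝ) 1, 0 ≤ f a ∧ f a ≤ 1)
    (s pw pn : ℝ) (hs : s ∈ Set.Icc (0:ℝ) 1)
    (hcap : pn - pw = π s) :
    pw ≤ (pw + pn) / 2 + ∫ a in (1:ℝ)..s, (1/2 - f a) * π' a ∧
    (pw + pn) / 2 + (∫ a in (1:ℝ)..s, (1/2 - f a) * π' a) ≤ pn := by
  exact (global_pressure_between_phase_pressures_general (HasDerivAt.continuousOn hπdiff)
    (fun a ha => hπdiff a (Ioo_subset_Icc_self ha))
    (fun a ha => hπ'nonpos a (Ioo_subset_Icc_self ha))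
    (hπnonneg 1 (right_mem_Icc.2 zero_le_one)) hfint
    (fun a ha => hf a (Ioo_subset_Icc_self ha)) hs hcap).2
end

section
/- Let f : ℝ → ℝ and ξ ∈ ℝ be such that f is nondecreasing on Set.Iic ξ and nonincreasing on Set.Ici ξ (a unimodal flux with a single global maximum at ξ). Then for all a, b ∈ ℝ, the Godunov numerical flux satisfies G f (a, b) = min (f (min a ξ)) (f (max ξ b)). -/
/-- The Godunov numerical flux: minimum of `f` over `[a,b]` when `a ≤ b`,
maximum of `f` over `[b,a]` when `b < a`. -/
noncomputable def godunov (f : ℝ → ℝ) (a b : ℝ) : ℝ :=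
  if a ≤ b then sInf (f '' Set.Icc a b) else sSup (f '' Set.Icc b a)

/-!
A unimodal flux is the pointwise minimum of its nondecreasing demand `x ↦ f (min x ξ)` and its
nonincreasing supply `x ↦ f (max ξ x)`. On the interval between `a` and `b`, the minimum of demand
and supply is compared with `min (demand a) (supply b)` by monotonicity: it lies above that value
when `a ≤ b`, below it when `b ≤ a`. The value is attained at one of the endpoints in the first
case, and at the projection of `ξ` to `[b, a]` in the second.
-/

open Set

section Extrema

variable {α β : Type*} [Preorder α] {g h : α → β} {a b c : α}

theorem isLeast_image_inf_Icc [LinearOrder β] (hg : MonotoneOn g (Icc a b))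
    (hh : AntitoneOn h (Icc a b)) (hab : a ≤ b) :
    IsLeast ((g ⊓ h) '' Icc a b) (g a ⊓ h b) := by
  have ha : a ∈ Icc a b := left_mem_Icc.2 hab
  have hb : b ∈ Icc a b := right_mem_Icc.2 hab
  refine ⟨?attained, ?lowerBound⟩
  case attained =>
    rcases le_total (g a) (h b) with hle | hle
    · have hga : g a ≤ h a := hle.trans (hh ha hb hab)
      exact ⟨a, ha, by rw [Pi.inf_apply, inf_eq_left.2 hga, inf_eq_left.2 hle]⟩
    · have hhb : h b ≤ g b := hle.trans (hg ha hb hab)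
      exact ⟨b, hb, by rw [Pi.inf_apply, inf_eq_right.2 hhb, inf_eq_right.2 hle]⟩
  case lowerBound =>
    rintro _ ⟨x, hx, rfl⟩
    exact inf_le_inf (hg ha hx hx.1) (hh hx hb hx.2)

theorem isGreatest_image_inf_Icc [SemilatticeInf β] (hg : MonotoneOn g (Icc a b))
    (hh : AntitoneOn h (Icc a b)) (hc : c ∈ Icc a b) (hgc : g c = g b) (hhc : h c = h a) :
    IsGreatest ((g ⊓ h) '' Icc a b) (g b ⊓ h a) := by
  have hab : a ≤ b := hc.1.trans hc.2
  refine ⟨⟨c, hc, by rw [Pi.inf_apply, hgc, hhc]⟩, ?_⟩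
  rintro _ ⟨x, hx, rfl⟩
  exact inf_le_inf (hg hx (right_mem_Icc.2 hab) hx.2) (hh (left_mem_Icc.2 hab) hx hx.1)

end Extrema

section DemandSupply

variable {α β : Type*} [LinearOrder α] {f : α → β} {ξ a b : α}

/-- The demand function of a flux `f` with maximum at `ξ`: the flux up to `ξ`, continued by the
constant `f ξ`. It is the nondecreasing part of a unimodal flux. -/
def fluxDemand (f : α → β) (ξ x : α) : β := f (min x ξ)

/-- The supply function of a flux `f` with maximum at `ξ`: the constant `f ξ` up to `ξ`, continued
by the flux. It is the nonincreasing part of a unimodal flux. -/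
def fluxSupply (f : α → β) (ξ x : α) : β := f (max ξ x)

theorem monotone_fluxDemand [Preorder β] (hf : MonotoneOn f (Iic ξ)) :
    Monotone (fluxDemand f ξ) := fun _ _ hxy =>
  hf (min_le_right _ _) (min_le_right _ _) (min_le_min_right ξ hxy)

theorem antitone_fluxSupply [Preorder β] (hf : AntitoneOn f (Ici ξ)) :
    Antitone (fluxSupply f ξ) := fun _ _ hxy =>
  hf (le_max_left _ _) (le_max_left _ _) (max_le_max_left ξ hxy)

theorem fluxDemand_inf_fluxSupply [SemilatticeInf β] (hmono : MonotoneOn f (Iic ξ))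
    (hanti : AntitoneOn f (Ici ξ)) : fluxDemand f ξ ⊓ fluxSupply f ξ = f := by
  funext x
  rw [Pi.inf_apply, fluxDemand, fluxSupply]
  rcases le_total x ξ with hx | hx
  · rw [min_eq_left hx, max_eq_left hx, inf_eq_left.2 (hmono hx self_mem_Iic hx)]
  · rw [min_eq_right hx, max_eq_right hx, inf_eq_right.2 (hanti self_mem_Ici hx hx)]

theorem fluxDemand_max_min (f : α → β) (ξ : α) (hba : b ≤ a) :
    fluxDemand f ξ (max b (min a ξ)) = fluxDemand f ξ a := by
  rw [fluxDemand, fluxDemand, min_max_distrib_right, min_assoc, min_self,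
    max_eq_right (min_le_min_right ξ hba)]

theorem fluxSupply_max_min (f : α → β) (ξ a b : α) :
    fluxSupply f ξ (max b (min a ξ)) = fluxSupply f ξ b := by
  rw [fluxSupply, fluxSupply, max_left_comm, max_eq_left (min_le_right a ξ), max_comm]

end DemandSupply

/-- For a unimodal flux with a single global maximum at `ξ`
(nondecreasing on `Iic ξ`, nonincreasing on `Ici ξ`), the Godunov flux equals
`min (f (min a ξ)) (f (max ξ b))`. -/
theorem godunov_of_unimodal_max (f : ℝ → ℝ) (ξ : ℝ)
    (hmono : MonotoneOn f (Set.Iic ξ)) (hanti : AntitoneOn f (Set.Ici ξ)) :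
    ∀ a b : ℝ, godunov f a b = min (f (min a ξ)) (f (max ξ b)) := by
  intro a b
  have hdemand := monotone_fluxDemand hmono
  have hsupply := antitone_fluxSupply hanti
  have hf := fluxDemand_inf_fluxSupply hmono hanti
  change godunov f a b = fluxDemand f ξ a ⊓ fluxSupply f ξ b
  rcases le_or_gt a b with hab | hba
  · have hleast := isLeast_image_inf_Icc (hdemand.monotoneOn _) (hsupply.antitoneOn _) hab
    rw [hf] at hleast
    rw [godunov, if_pos hab, hleast.csInf_eq]
  · have hproj : max b (min a ξ) ∈ Icc b a := ⟨le_max_left _ _, max_le hba.le (min_le_left _ _)⟩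
    have hgreatest := isGreatest_image_inf_Icc (hdemand.monotoneOn _) (hsupply.antitoneOn _) hproj
      (fluxDemand_max_min f ξ hba.le) (fluxSupply_max_min f ξ a b)
    rw [hf] at hgreatest
    rw [godunov, if_neg hba.not_ge, hgreatest.csSup_eq]
end

section
/- Let f : ℝ → ℝ and ξ ∈ ℝ be such that f is nonincreasing on Set.Iic ξ and nondecreasing on Set.Ici ξ (a unimodal flux with a single global minimum at ξ). Then for all a, b ∈ ℝ, the Godunov numerical flux satisfies G f (a, b) = max (f (max a ξ)) (f (min ξ b)). -/
/-! A flux that decreases up to `ξ` and increases afterwards is smallest on an interval at the point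
of the interval nearest to `ξ`, and largest at one of the two endpoints. In the orientation `a ≤ b`
the two-point formula evaluates to the former value, in the orientation `b ≤ a` to the latter. -/

section Unimodal

open Set

variable {α β : Type*} [LinearOrder α] {f : α → β} {ξ a b : α}

theorem isLeast_image_Icc_of_anti_mono [Preorder β] (hab : a ≤ b)
    (hanti : AntitoneOn f (Icc a ξ)) (hmono : MonotoneOn f (Icc ξ b)) :
    IsLeast (f '' Icc a b) (f (max a (min ξ b))) := by
  rcases le_total ξ a with hξa | haξ
  · rw [min_eq_left (hξa.trans hab), max_eq_left hξa]
    exact (hmono.mono (Icc_subset_Icc_left hξa)).map_isLeast (isLeast_Icc hab)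
  rw [max_eq_right (le_min haξ hab)]
  rcases le_total ξ b with hξb | hbξ
  · rw [min_eq_left hξb]
    exact ⟨mem_image_of_mem f ⟨haξ, hξb⟩,
      forall_mem_image.2 (isMinOn_Icc_of_anti_mono hanti hmono)⟩
  · rw [min_eq_right hbξ]
    exact (hanti.mono (Icc_subset_Icc_right hbξ)).map_isGreatest (isGreatest_Icc hab)

variable [LinearOrder β]

theorem isGreatest_image_Icc_of_anti_mono (hab : a ≤ b)
    (hanti : AntitoneOn f (Icc a ξ)) (hmono : MonotoneOn f (Icc ξ b)) :
    IsGreatest (f '' Icc a b) (max (f a) (f b)) := by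
  refine ⟨max_rec' (· ∈ f '' Icc a b) (mem_image_of_mem f (left_mem_Icc.2 hab))
    (mem_image_of_mem f (right_mem_Icc.2 hab)), forall_mem_image.2 fun x hx ↦ ?_⟩
  rcases le_total x ξ with hxξ | hξx
  · have haξ : a ≤ ξ := hx.1.trans hxξ
    exact le_max_of_le_left (hanti (left_mem_Icc.2 haξ) ⟨hx.1, hxξ⟩ hx.1)
  · have hξb : ξ ≤ b := hξx.trans hx.2
    exact le_max_of_le_right (hmono ⟨hξx, hx.2⟩ (right_mem_Icc.2 hξb) hx.2)

theorem max_apply_max_apply_min_of_isMinOn (hab : a ≤ b) (hmin : IsMinOn f (Icc a b) ξ) :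
    max (f (max a ξ)) (f (min ξ b)) = f (max a (min ξ b)) := by
  rcases le_total ξ a with hξa | haξ
  · rw [min_eq_left (hξa.trans hab), max_eq_left hξa, max_eq_left (hmin (left_mem_Icc.2 hab))]
  · have hmem : min ξ b ∈ Icc a b := ⟨le_min haξ hab, min_le_right ξ b⟩
    rw [max_eq_right haξ, max_eq_right hmem.1, max_eq_right (hmin hmem)]

theorem max_apply_max_apply_min_of_anti_mono (hba : b ≤ a)
    (hanti : AntitoneOn f (Icc b ξ)) (hmono : MonotoneOn f (Icc ξ a)) :
    max (f (max a ξ)) (f (min ξ b)) = max (f b) (f a) := by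
  rcases le_total ξ b with hξb | hbξ
  · have hξa : ξ ≤ a := hξb.trans hba
    have hfξ : f ξ ≤ f a := hmono (left_mem_Icc.2 hξa) (right_mem_Icc.2 hξa) hξa
    have hfb : f b ≤ f a := hmono ⟨hξb, hba⟩ (right_mem_Icc.2 hξa) hba
    rw [max_eq_left hξa, min_eq_left hξb, max_eq_left hfξ, max_eq_right hfb]
  rw [min_eq_right hbξ]
  rcases le_total ξ a with hξa | haξ
  · rw [max_eq_left hξa, max_comm]
  · have hfξ : f ξ ≤ f b := hanti (left_mem_Icc.2 hbξ) (right_mem_Icc.2 hbξ) hbξ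
    have hfa : f a ≤ f b := hanti (left_mem_Icc.2 hbξ) ⟨hba, haξ⟩ hba
    rw [max_eq_right haξ, max_eq_right hfξ, max_eq_left hfa]

end Unimodal

theorem godunov_of_unimodal_min_general {α β : Type*} [LinearOrder α]
    [ConditionallyCompleteLinearOrder β] {f : α → β} {ξ : α}
    (hanti : AntitoneOn f (Set.Iic ξ)) (hmono : MonotoneOn f (Set.Ici ξ)) (a b : α) :
    (if a ≤ b then sInf (f '' Set.Icc a b) else sSup (f '' Set.Icc b a)) =
      max (f (max a ξ)) (f (min ξ b)) := by
  have hanti' (x : α) : AntitoneOn f (Set.Icc x ξ) := hanti.mono Set.Icc_subset_Iic_self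
  have hmono' (x : α) : MonotoneOn f (Set.Icc ξ x) := hmono.mono Set.Icc_subset_Ici_self
  split_ifs with hab
  · have hmin : IsMinOn f (Set.Icc a b) ξ := isMinOn_Icc_of_anti_mono (hanti' a) (hmono' b)
    rw [max_apply_max_apply_min_of_isMinOn hab hmin]
    exact (isLeast_image_Icc_of_anti_mono hab (hanti' a) (hmono' b)).csInf_eq
  · have hba : b ≤ a := le_of_not_ge hab
    rw [max_apply_max_apply_min_of_anti_mono hba (hanti' b) (hmono' a)]
    exact (isGreatest_image_Icc_of_anti_mono hba (hanti' b) (hmono' a)).csSup_eq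

/-- For a unimodal flux with a single global minimum at `ξ`
(nonincreasing on `Iic ξ`, nondecreasing on `Ici ξ`), the Godunov flux equals
`max (f (max a ξ)) (f (min ξ b))`. -/
theorem godunov_of_unimodal_min (f : ℝ → ℝ) (ξ : ℝ)
    (hanti : AntitoneOn f (Set.Iic ξ)) (hmono : MonotoneOn f (Set.Ici ξ)) :
    ∀ a b : ℝ, godunov f a b = max (f (max a ξ)) (f (min ξ b)) :=
  godunov_of_unimodal_min_general hanti hmono
end

section
/- Let f : ℝ → ℝ be continuous. Then the Godunov numerical flux G f is nondecreasing in its first argument and nonincreasing in its second argument: for all a₁ ≤ a₂ and all b, G f (a₁, b) ≤ G f (a₂, b), and for all a and all b₁ ≤ b₂, G f (a, b₂) ≤ G f (a, b₁). -/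
/-!
As one endpoint moves, the infimum or supremum is taken over a nested family of intervals, so the
flux is monotone on either side of the diagonal `a = b`. On the diagonal both branches equal `f a`,
so the two monotone pieces glue there.
-/

open Set

section ImageIcc

variable {α β : Type*} [Preorder α] [ConditionallyCompleteLattice β] {f : α → β} {c : α}

theorem monotoneOn_sInf_image_Icc_left (hf : ∀ x, BddBelow (f '' Icc x c)) :
    MonotoneOn (fun x => sInf (f '' Icc x c)) (Iic c) :=
  fun x _ _ hy hxy => csInf_le_csInf (hf x) ((nonempty_Icc.2 hy).image f)
    (image_mono (Icc_subset_Icc_left hxy))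

theorem antitoneOn_sInf_image_Icc_right (hf : ∀ x, BddBelow (f '' Icc c x)) :
    AntitoneOn (fun x => sInf (f '' Icc c x)) (Ici c) :=
  fun _ hx y _ hxy => csInf_le_csInf (hf y) ((nonempty_Icc.2 hx).image f)
    (image_mono (Icc_subset_Icc_right hxy))

theorem antitoneOn_sSup_image_Icc_left (hf : ∀ x, BddAbove (f '' Icc x c)) :
    AntitoneOn (fun x => sSup (f '' Icc x c)) (Iic c) :=
  monotoneOn_sInf_image_Icc_left (β := βᵒᵈ) hf

theorem monotoneOn_sSup_image_Icc_right (hf : ∀ x, BddAbove (f '' Icc c x)) :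
    MonotoneOn (fun x => sSup (f '' Icc c x)) (Ici c) :=
  antitoneOn_sInf_image_Icc_right (β := βᵒᵈ) hf

end ImageIcc

section Godunov

variable {f : ℝ → ℝ} {a b : ℝ}

theorem godunov_of_le (h : a ≤ b) : godunov f a b = sInf (f '' Icc a b) :=
  if_pos h

theorem godunov_of_ge (h : b ≤ a) : godunov f a b = sSup (f '' Icc b a) := by
  obtain rfl | h := h.eq_or_lt
  · simp [godunov]
  · exact if_neg h.not_ge

theorem monotone_godunov_left (hbelow : ∀ a, BddBelow (f '' Icc a b))
    (habove : ∀ a, BddAbove (f '' Icc b a)) : Monotone fun a => godunov f a b :=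
  ((monotoneOn_sInf_image_Icc_left hbelow).congr fun _ h => (godunov_of_le h).symm).Iic_union_Ici
    ((monotoneOn_sSup_image_Icc_right habove).congr fun _ h => (godunov_of_ge h).symm)

theorem antitone_godunov_right (hbelow : ∀ b, BddBelow (f '' Icc a b))
    (habove : ∀ b, BddAbove (f '' Icc b a)) : Antitone (godunov f a) :=
  ((antitoneOn_sSup_image_Icc_left habove).congr fun _ h => (godunov_of_ge h).symm).Iic_union_Ici
    ((antitoneOn_sInf_image_Icc_right hbelow).congr fun _ h => (godunov_of_le h).symm)

end Godunov

theorem godunov_monotonicity_general (f : ℝ → ℝ)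
    (hf : ∀ a b : ℝ, Bornology.IsBounded (f '' Icc a b)) :
    (∀ a₁ a₂ b : ℝ, a₁ ≤ a₂ → godunov f a₁ b ≤ godunov f a₂ b) ∧
    (∀ a b₁ b₂ : ℝ, b₁ ≤ b₂ → godunov f a b₂ ≤ godunov f a b₁) :=
  ⟨fun _ _ b h => monotone_godunov_left (fun a => (hf a b).bddBelow) (fun a => (hf b a).bddAbove) h,
    fun a _ _ h => antitone_godunov_right (fun b => (hf a b).bddBelow)
      (fun b => (hf b a).bddAbove) h⟩

/-- For continuous `f`, the Godunov flux is nondecreasing in its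
first argument and nonincreasing in its second argument. -/
theorem godunov_monotonicity (f : ℝ → ℝ) (hf : Continuous f) :
    (∀ a₁ a₂ b : ℝ, a₁ ≤ a₂ → godunov f a₁ b ≤ godunov f a₂ b) ∧
    (∀ a b₁ b₂ : ℝ, b₁ ≤ b₂ → godunov f a b₂ ≤ godunov f a b₁) :=
  godunov_monotonicity_general f fun _ _ => (isCompact_Icc.image hf).isBounded
end

section
/- Let f : ℝ → ℝ be continuous. Then the Godunov numerical flux G f is continuous in each argument: for every fixed b ∈ ℝ, the map a ↦ G f (a, b) is continuous on ℝ, and for every fixed a ∈ ℝ, the map b ↦ G f (a, b) is continuous on ℝ. -/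
/-!
Every segment `[x, y]` is the image of the fixed compact interval `[0, 1]` under a map that depends
continuously on `(x, y)`, so the extrema of a continuous function over `[x, y]` are continuous in
`(x, y)`. The Godunov flux glues the minimum and the maximum along the diagonal, where the segment
is a single point and both are equal to the value of `f` there.
-/

open scoped Convex

section SegmentExtrema

variable (𝕜 : Type*) {E α : Type*} [Ring 𝕜] [PartialOrder 𝕜] [AddRightMono 𝕜]
  [TopologicalSpace 𝕜] [CompactIccSpace 𝕜]
  [AddCommGroup E] [Module 𝕜 E] [TopologicalSpace E] [IsTopologicalAddGroup E] [ContinuousSMul 𝕜 E]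
  [ConditionallyCompleteLinearOrder α] [TopologicalSpace α] [OrderTopology α]

theorem continuous_sSup_image_segment {f : E → α} (hf : Continuous f) :
    Continuous fun p : E × E => sSup (f '' [p.1 -[𝕜] p.2]) := by
  simp only [segment_eq_image', Set.image_image]
  refine (isCompact_Icc (a := (0 : 𝕜)) (b := 1)).continuous_sSup
    (f := fun (p : E × E) t => f (p.1 + t • (p.2 - p.1))) ?_
  change Continuous fun q : (E × E) × 𝕜 => f (q.1.1 + q.2 • (q.1.2 - q.1.1))
  fun_prop

theorem continuous_sInf_image_segment {f : E → α} (hf : Continuous f) :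
    Continuous fun p : E × E => sInf (f '' [p.1 -[𝕜] p.2]) :=
  continuous_sSup_image_segment 𝕜 (α := αᵒᵈ) hf

end SegmentExtrema

theorem godunov_eq_ite_segment (f : ℝ → ℝ) (a b : ℝ) :
    godunov f a b = if a ≤ b then sInf (f '' [a -[ℝ] b]) else sSup (f '' [a -[ℝ] b]) := by
  unfold godunov
  split_ifs with hab
  · rw [segment_eq_Icc hab]
  · rw [segment_symm, segment_eq_Icc (le_of_not_ge hab)]

theorem godunov_continuity_general {f : ℝ → ℝ} (hf : Continuous f) :
    Continuous (Function.uncurry (godunov f)) := by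
  simp only [Function.uncurry_def, godunov_eq_ite_segment]
  refine (continuous_sInf_image_segment ℝ hf).if_le (continuous_sSup_image_segment ℝ hf)
    continuous_fst continuous_snd fun p hp => ?_
  rw [hp, segment_same, Set.image_singleton, csInf_singleton, csSup_singleton]

/-- For continuous `f`, the Godunov flux is continuous in each
of its arguments separately. -/
theorem godunov_continuity (f : ℝ → ℝ) (hf : Continuous f) :
    (∀ b : ℝ, Continuous fun a => godunov f a b) ∧
    (∀ a : ℝ, Continuous fun b => godunov f a b) :=
  have h := godunov_continuity_general hf
  ⟨fun b => h.uncurry_right b, fun a => h.uncurry_left a⟩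
end
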